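/- For every H ∈ (0,1] there exists a probability measure ℙ on the product measurable space ℝ^{[0,1]} (with the product σ-algebra) such that for every n ∈ ℕ and all times t_1,…,t_n ∈ [0,1], the pushforward of ℙ under the evaluation map ω ↦ (ω(t_1),…,ω(t_n)) is the centered multivariate Gaussian measure on ℝ^n with covariance matrix (R(t_i,t_j))_{1≤i,j≤n}. In other words, the canonical process B_t(ω) = ω(t) is a centered Gaussian process with covariance E[B_s B_t] = R(s,t), i.e., a fractional Brownian motion with Hurst parameter H. -/

import Mathlib

open MeasureTheory
open scoped BigOperators

/-- Fractional Brownian motion covariance kernel with Hurst parameter `H`. -/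
noncomputable def fbmCov (H s t : ℝ) : ℝ :=
  (s ^ (2 * H) + t ^ (2 * H) - |t - s| ^ (2 * H)) / 2

/-- `μ` is the centered multivariate Gaussian measure on `ℝⁿ` with covariance matrix `S`,
characterized (uniquely, by Bochner's theorem) through its characteristic function:
`μ` is a probability measure and `∫ e^{i⟨u,x⟩} dμ(x) = e^{-(1/2) uᵀ S u}` for all `u`. -/
def IsCenteredGaussianWithCov {n : ℕ} (μ : Measure (Fin n → ℝ))
    (S : Fin n → Fin n → ℝ) : Prop :=
  IsProbabilityMeasure μ ∧
    ∀ u : Fin n → ℝ,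
      ∫ x, Complex.exp (Complex.I * ((∑ i, u i * x i : ℝ) : ℂ)) ∂μ =
        Complex.exp (-((∑ i, ∑ j, u i * u j * S i j : ℝ) : ℂ) / 2)

/-!
By polarization, `fbmCov H s t` is the inner product `⟪k s, k t⟫` for any curve `k` in a Hilbert
space with `k 0 = 0` and `‖k s - k t‖ = |s - t| ^ H`. For `H = 1` the real line is such a curve.
For `H < 1` take `k t x = |x| ^ (-(H + 1/2)) (e^{itx} - 1)` in `L²(ℝ)`, up to normalization: the
modulus of `k s - k t` is that of `k (s - t)`, and substituting `y = tx` in `‖k t‖²` extracts the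
factor `|t| ^ (2 * H)`.

Mapping a Hilbert basis to independent standard Gaussian variables extends to a linear isometry `Φ`
into `L²(P)`, all of whose values are Gaussian because `L²`-limits of centered Gaussian variables
are Gaussian. The process `t ↦ Φ (k t)` then has covariance `⟪k s, k t⟫`.
-/

open ProbabilityTheory
open scoped NNReal ENNReal Topology

section Isonormal

variable {Ω : Type*} [MeasurableSpace Ω] {P : Measure Ω}

lemma continuous_charFun_map {E : Type*} [NormedAddCommGroup E] [InnerProductSpace ℝ E]
    [MeasurableSpace E] [BorelSpace E] {p : ℝ≥0∞} [Fact (1 ≤ p)] [IsProbabilityMeasure P]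
    (t : E) : Continuous fun f : Lp E p P ↦ charFun (P.map f) t := by
  refine continuous_iff_continuousAt.2 fun f ↦ ?_
  have hmeasure : TendstoInMeasure P (fun g : Lp E p P ↦ ⇑g) (𝓝 f) f :=
    tendstoInMeasure_of_tendsto_Lp Filter.tendsto_id
  have hlaw := hmeasure.tendstoInDistribution fun g ↦ (Lp.aestronglyMeasurable g).aemeasurable
  simp only [ContinuousAt, charFun_eq_integral_innerProbChar]
  exact (ProbabilityMeasure.tendsto_iff_forall_integral_rclike_tendsto ℂ).1 hlaw.tendsto
    (BoundedContinuousFunction.innerProbChar t)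

lemma hasLaw_gaussianReal_iff_charFun [IsFiniteMeasure P] {X : Ω → ℝ} (hX : AEMeasurable X P)
    {m : ℝ} {v : ℝ≥0} : HasLaw X (gaussianReal m v) P ↔
      ∀ t : ℝ, charFun (P.map X) t = Complex.exp (t * m * Complex.I - v * t ^ 2 / 2) := by
  simp only [← charFun_gaussianReal]
  exact ⟨fun h t ↦ by rw [h.map_eq], fun h ↦ ⟨hX, Measure.ext_of_charFun (funext h)⟩⟩

lemma isClosed_setOf_hasLaw_gaussianReal [IsProbabilityMeasure P] :
    IsClosed {f : Lp ℝ 2 P | HasLaw f (gaussianReal 0 (‖f‖₊ ^ 2)) P} := by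
  simp only [hasLaw_gaussianReal_iff_charFun (Lp.aestronglyMeasurable _).aemeasurable,
    Set.ofPred_forall]
  exact isClosed_iInter fun t ↦ isClosed_eq (continuous_charFun_map t) (by fun_prop)

lemma norm_toLp_sq {F : Type*} [NormedAddCommGroup F] [InnerProductSpace ℝ F] {f : Ω → F}
    (hf : MemLp f 2 P) : ‖hf.toLp‖ ^ 2 = ∫ ω, ‖f ω‖ ^ 2 ∂P := by
  rw [← real_inner_self_eq_norm_sq, L2.inner_def]
  refine integral_congr_ae (hf.coeFn_toLp.mono fun ω hω ↦ ?_)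
  simp only [hω, real_inner_self_eq_norm_sq]

lemma variance_coeFn_Lp {f : Lp ℝ 2 P} (hf : ∫ ω, f ω ∂P = 0) : Var[f; P] = ‖f‖ ^ 2 := by
  rw [variance_of_integral_eq_zero (Lp.aestronglyMeasurable f).aemeasurable hf,
    ← real_inner_self_eq_norm_sq, L2.inner_def]
  simp only [Real.inner_apply, sq]

lemma hasLaw_gaussianReal_of_integral_eq_zero {f : Lp ℝ 2 P} (hf : HasGaussianLaw f P)
    (hmean : ∫ ω, f ω ∂P = 0) : HasLaw f (gaussianReal 0 (‖f‖₊ ^ 2)) P where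
  aemeasurable := hf.aemeasurable
  map_eq := by
    rw [hf.map_eq_gaussianReal, hmean, variance_coeFn_Lp hmean, ← coe_nnnorm, ← NNReal.coe_pow,
      Real.toNNReal_coe]

lemma coeFn_sum_smul_Lp {ι : Type*} (c : ι → ℝ) (f : ι → Lp ℝ 2 P) (s : Finset ι) :
    ⇑(∑ i ∈ s, c i • f i) =ᵐ[P] fun ω ↦ ∑ i ∈ s, c i * f i ω := by
  have hterm : ∀ᵐ ω ∂P, ∀ i ∈ s, (c i • f i : Lp ℝ 2 P) ω = c i * f i ω :=
    (Filter.eventually_all_finset s).2 fun i _ ↦ Lp.coeFn_smul (c i) (f i)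
  filter_upwards [Lp.coeFn_finsetSum s fun i ↦ c i • f i, hterm] with ω hsum hterm
  rw [hsum, Finset.sum_apply, Finset.sum_congr rfl hterm]

section Independent

variable {ι : Type*} {ξ : ι → Lp ℝ 2 P}

lemma orthonormal_of_iIndepFun (hindep : iIndepFun (fun i ↦ ⇑(ξ i)) P)
    (hmean : ∀ i, ∫ ω, ξ i ω ∂P = 0) (hnorm : ∀ i, ‖ξ i‖ = 1) : Orthonormal ℝ ξ := by
  refine ⟨hnorm, fun i j hij ↦ ?_⟩
  have hmul := (hindep.indepFun hij).integral_fun_mul_eq_mul_integral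
    (Lp.aestronglyMeasurable (ξ i)) (Lp.aestronglyMeasurable (ξ j))
  simp only [L2.inner_def, Real.inner_apply, hmul, hmean i, zero_mul]

lemma hasLaw_sum_smul_of_iIndepFun (hindep : iIndepFun (fun i ↦ ⇑(ξ i)) P)
    (hgauss : ∀ i, HasGaussianLaw (ξ i) P) (hmean : ∀ i, ∫ ω, ξ i ω ∂P = 0)
    (c : ι → ℝ) (s : Finset ι) :
    HasLaw (∑ i ∈ s, c i • ξ i : Lp ℝ 2 P) (gaussianReal 0 (‖∑ i ∈ s, c i • ξ i‖₊ ^ 2)) P := by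
  have hprocess : IsGaussianProcess (fun i ↦ ⇑(ξ i)) P :=
    ⟨fun I ↦ (hindep.precomp (g := ((↑) : I → ι)) Subtype.val_injective).hasGaussianLaw
      fun i ↦ hgauss i⟩
  have : IsProbabilityMeasure P := hprocess.isProbabilityMeasure
  have hcoe := coeFn_sum_smul_Lp c ξ s
  refine hasLaw_gaussianReal_of_integral_eq_zero
    ((hprocess.smul c).hasGaussianLaw_fun_sum.congr hcoe.symm) ?_
  rw [integral_congr_ae hcoe, integral_finsetSum _ fun i _ ↦
    ((Lp.memLp (ξ i)).integrable one_le_two).const_mul (c i)]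
  simp only [integral_const_mul, hmean, mul_zero, Finset.sum_const_zero]

end Independent

variable {E : Type*} [NormedAddCommGroup E] [InnerProductSpace ℝ E]

/-- An isonormal Gaussian process over the Hilbert space `E`: a linear isometry `Φ` from `E` into
`L²(P)` such that `Φ x` is a centered Gaussian variable for every `x`, necessarily of variance
`‖x‖ ^ 2`. By linearity all the `Φ x` are then jointly Gaussian. -/
def IsIsonormal (Φ : E →ₗᵢ[ℝ] Lp ℝ 2 P) : Prop :=
  ∀ x, HasLaw (Φ x) (gaussianReal 0 (‖x‖₊ ^ 2)) P

lemma exists_isIsonormal.{u} (E : Type u) [NormedAddCommGroup E] [InnerProductSpace ℝ E]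
    [CompleteSpace E] :
    ∃ (Ω : Type u) (_ : MeasurableSpace Ω) (P : Measure Ω) (Φ : E →ₗᵢ[ℝ] Lp ℝ 2 P),
      IsIsonormal Φ := by
  obtain ⟨ι, b, -⟩ := exists_hilbertBasis ℝ E
  obtain ⟨Ω, _, P, X, -, hlaw, hindep, _⟩ := exists_iid ι (gaussianReal 0 1)
  have hgauss (i : ι) : HasGaussianLaw (X i) P := (hlaw i).hasGaussianLaw
  let ξ (i : ι) : Lp ℝ 2 P := (hgauss i).memLp_two.toLp
  have hcoe (i : ι) : ξ i =ᵐ[P] X i := (hgauss i).memLp_two.coeFn_toLp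
  have hlawξ (i : ι) : HasLaw (ξ i) (gaussianReal 0 1) P := (hlaw i).congr (hcoe i)
  have hindepξ : iIndepFun (fun i ↦ ⇑(ξ i)) P := hindep.congr fun i ↦ (hcoe i).symm
  have hmean (i : ι) : ∫ ω, ξ i ω ∂P = 0 := by rw [(hlawξ i).integral_eq, integral_id_gaussianReal]
  have hnorm (i : ι) : ‖ξ i‖ = 1 := by
    have hsq := variance_coeFn_Lp (hmean i)
    rw [(hlawξ i).variance_eq, variance_id_gaussianReal, NNReal.coe_one] at hsq
    exact (pow_eq_one_iff_of_nonneg (norm_nonneg _) two_ne_zero).1 hsq.symm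
  let V := (orthonormal_of_iIndepFun hindepξ hmean hnorm).orthogonalFamily
  let Φ : E →ₗᵢ[ℝ] Lp ℝ 2 P := V.linearIsometry.comp b.repr.toLinearIsometry
  refine ⟨Ω, _, P, Φ, fun x ↦ ?_⟩
  have hsum : HasSum (fun i ↦ b.repr x i • ξ i) (Φ x) := V.hasSum_linearIsometry (b.repr x)
  rw [← Φ.nnnorm_map x]
  exact isClosed_setOf_hasLaw_gaussianReal.mem_of_tendsto hsum <| .of_forall fun s ↦
    hasLaw_sum_smul_of_iIndepFun hindepξ (fun i ↦ (hlawξ i).hasGaussianLaw) hmean _ s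

lemma norm_sum_smul_sq {ι : Type*} [Fintype ι] (u : ι → ℝ) (x : ι → E) :
    ‖∑ i, u i • x i‖ ^ 2 = ∑ i, ∑ j, u i * u j * inner ℝ (x i) (x j) := by
  simp_rw [← real_inner_self_eq_norm_sq, sum_inner, inner_sum, real_inner_smul_left,
    real_inner_smul_right, mul_assoc]

lemma IsIsonormal.isCenteredGaussianWithCov {Φ : E →ₗᵢ[ℝ] Lp ℝ 2 P} (hΦ : IsIsonormal Φ) {n : ℕ}
    (x : Fin n → E) :
    IsCenteredGaussianWithCov (P.map fun ω i ↦ Φ (x i) ω) fun i j ↦ inner ℝ (x i) (x j) := by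
  have : IsProbabilityMeasure P := (hΦ 0).isProbabilityMeasure
  have hmeas : AEMeasurable (fun ω i ↦ Φ (x i) ω) P :=
    aemeasurable_pi_lambda _ fun i ↦ (hΦ (x i)).aemeasurable
  refine ⟨Measure.isProbabilityMeasure_map hmeas, fun u ↦ ?_⟩
  have hcoe : Φ (∑ i, u i • x i) =ᵐ[P] fun ω ↦ ∑ i, u i * Φ (x i) ω := by
    simpa only [map_sum, map_smul] using
      coeFn_sum_smul_Lp u (fun i ↦ Φ (x i)) Finset.univ
  have hlaw := (hΦ (∑ i, u i • x i)).congr hcoe.symm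
  have hchar := (hasLaw_gaussianReal_iff_charFun hlaw.aemeasurable).1 hlaw 1
  rw [charFun_apply_real, integral_map hlaw.aemeasurable
    (Continuous.aestronglyMeasurable (by fun_prop))] at hchar
  rw [integral_map hmeas (Continuous.aestronglyMeasurable (by fun_prop)), ← norm_sum_smul_sq]
  simpa [mul_comm, neg_div] using hchar

lemma exists_measure_isCenteredGaussianWithCov_inner {T E : Type*} [NormedAddCommGroup E]
    [InnerProductSpace ℝ E] [CompleteSpace E] (k : T → E) :
    ∃ P : Measure (T → ℝ), IsProbabilityMeasure P ∧ ∀ (n : ℕ) (t : Fin n → T),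
      IsCenteredGaussianWithCov (P.map fun ω i ↦ ω (t i))
        fun i j ↦ inner ℝ (k (t i)) (k (t j)) := by
  obtain ⟨Ω, _, P, Φ, hΦ⟩ := exists_isIsonormal E
  have : IsProbabilityMeasure P := (hΦ 0).isProbabilityMeasure
  have hmeas : Measurable fun ω t ↦ Φ (k t) ω :=
    measurable_pi_lambda _ fun t ↦ (Lp.stronglyMeasurable _).measurable
  refine ⟨P.map fun ω t ↦ Φ (k t) ω, Measure.isProbabilityMeasure_map hmeas.aemeasurable,
    fun n t ↦ ?_⟩
  rw [Measure.map_map (by fun_prop) hmeas]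
  exact hΦ.isCenteredGaussianWithCov fun i ↦ k (t i)

end Isonormal

section Helix

variable {E : Type*} [NormedAddCommGroup E] [InnerProductSpace ℝ E]

/-- A helix of exponent `H`: a curve `k` in a Hilbert space, starting at the origin, whose chords
depend only on the time increment, `‖k s - k t‖ = |s - t| ^ H`, an equation stated squared. It is
a feature map of the covariance of fractional Brownian motion. -/
structure IsHelix (H : ℝ) (k : ℝ → E) : Prop where
  map_zero : k 0 = 0
  norm_sub_sq : ∀ s t, ‖k s - k t‖ ^ 2 = |s - t| ^ (2 * H)

lemma IsHelix.inner_eq_fbmCov {H : ℝ} {k : ℝ → E} (hk : IsHelix H k) {s t : ℝ} (hs : 0 ≤ s)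
    (ht : 0 ≤ t) : inner ℝ (k s) (k t) = fbmCov H s t := by
  have hnorm {r : ℝ} (hr : 0 ≤ r) : ‖k r‖ ^ 2 = r ^ (2 * H) := by
    simpa [hk.map_zero, abs_of_nonneg hr] using hk.norm_sub_sq r 0
  have hsub := norm_sub_sq_real (k s) (k t)
  rw [hk.norm_sub_sq, hnorm hs, hnorm ht, abs_sub_comm] at hsub
  rw [fbmCov]
  linarith

end Helix

section HarmonizableKernel

/-- The spectral representation `x ↦ |x| ^ (-(H + 1/2)) (e^{itx} - 1)` of fractional Brownian
motion of Hurst parameter `H` at time `t`: up to a constant, `t ↦ harmonizableKernel H t` embeds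
the time axis in `L²(ℝ)` so that times `s` and `t` are at distance `|s - t| ^ H`. -/
noncomputable def harmonizableKernel (H t x : ℝ) : ℂ :=
  (|x| ^ (-(H + 1 / 2)) : ℝ) * (Complex.exp (Complex.I * (t * x : ℝ)) - 1)

@[fun_prop]
lemma measurable_harmonizableKernel (H t : ℝ) : Measurable (harmonizableKernel H t) := by
  unfold harmonizableKernel
  fun_prop

lemma harmonizableKernel_zero (H : ℝ) : harmonizableKernel H 0 = 0 := by
  ext x
  simp [harmonizableKernel]

lemma norm_harmonizableKernel_sub (H s t x : ℝ) :
    ‖harmonizableKernel H s x - harmonizableKernel H t x‖ = ‖harmonizableKernel H (s - t) x‖ := by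
  have hexp : Complex.exp (Complex.I * (s * x : ℝ)) - Complex.exp (Complex.I * (t * x : ℝ)) =
      Complex.exp (Complex.I * (t * x : ℝ)) *
        (Complex.exp (Complex.I * ((s - t) * x : ℝ)) - 1) := by
    rw [mul_sub, ← Complex.exp_add, mul_one]
    push_cast
    ring_nf
  rw [harmonizableKernel, harmonizableKernel, ← mul_sub, sub_sub_sub_cancel_right, hexp,
    harmonizableKernel, norm_mul, norm_mul, Complex.norm_exp_I_mul_ofReal, one_mul, norm_mul]

lemma sq_norm_harmonizableKernel (H t x : ℝ) :
    ‖harmonizableKernel H t x‖ ^ 2 = |x| ^ (-1 - 2 * H) * (2 * Real.sin (t * x / 2)) ^ 2 := by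
  rw [harmonizableKernel, norm_mul, mul_pow, Complex.norm_exp_I_mul_ofReal_sub_one,
    Complex.norm_real, Real.norm_of_nonneg (by positivity), Real.norm_eq_abs, sq_abs,
    ← Real.rpow_mul_natCast (abs_nonneg x)]
  ring_nf

lemma sq_norm_harmonizableKernel_eq_mul {H t : ℝ} (ht : t ≠ 0) (x : ℝ) :
    ‖harmonizableKernel H t x‖ ^ 2 =
      |t| ^ (1 + 2 * H) * ‖harmonizableKernel H 1 (t * x)‖ ^ 2 := by
  have hpow : |t| ^ (1 + 2 * H) * |t| ^ (-1 - 2 * H) = 1 := by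
    rw [← Real.rpow_add (abs_pos.2 ht)]
    simp
  rw [sq_norm_harmonizableKernel, sq_norm_harmonizableKernel, one_mul, abs_mul,
    Real.mul_rpow (abs_nonneg t) (abs_nonneg x), ← mul_assoc, ← mul_assoc, hpow, one_mul]

lemma sq_norm_harmonizableKernel_abs (H t x : ℝ) :
    ‖harmonizableKernel H t |x|‖ ^ 2 = ‖harmonizableKernel H t x‖ ^ 2 := by
  rcases abs_choice x with hx | hx <;> simp [hx, sq_norm_harmonizableKernel, neg_div]

lemma sq_norm_harmonizableKernel_one_le_rpow (H : ℝ) {x : ℝ} (hx : 0 < x) :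
    ‖harmonizableKernel H 1 x‖ ^ 2 ≤ x ^ (1 - 2 * H) := by
  rw [sq_norm_harmonizableKernel, abs_of_pos hx, one_mul]
  calc x ^ (-1 - 2 * H) * (2 * Real.sin (x / 2)) ^ 2
      ≤ x ^ (-1 - 2 * H) * x ^ 2 := by
        gcongr ?_ * ?_
        linarith [Real.sin_sq_le_sq (x := x / 2)]
    _ = x ^ (1 - 2 * H) := by
        rw [← Real.rpow_natCast, ← Real.rpow_add hx]
        ring_nf

lemma sq_norm_harmonizableKernel_one_le_four_mul_rpow (H : ℝ) {x : ℝ} (hx : 0 < x) :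
    ‖harmonizableKernel H 1 x‖ ^ 2 ≤ 4 * x ^ (-1 - 2 * H) := by
  rw [sq_norm_harmonizableKernel, abs_of_pos hx, one_mul, mul_comm]
  gcongr
  linarith [Real.sin_sq_le_one (x / 2)]

lemma sq_norm_harmonizableKernel_one_pos (H : ℝ) {x : ℝ} (hx : x ∈ Set.Ioo 0 1) :
    0 < ‖harmonizableKernel H 1 x‖ ^ 2 := by
  have hsin : 0 < Real.sin (x / 2) :=
    Real.sin_pos_of_pos_of_lt_pi (by linarith [hx.1]) (by linarith [hx.2, Real.pi_gt_three])
  have hrpow : 0 < |x| ^ (-1 - 2 * H) := Real.rpow_pos_of_pos (abs_pos.2 hx.1.ne') _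
  rw [sq_norm_harmonizableKernel, one_mul]
  positivity

variable {H : ℝ}

lemma integrable_sq_norm_harmonizableKernel_one (hH0 : 0 < H) (hH1 : H < 1) :
    Integrable fun x ↦ ‖harmonizableKernel H 1 x‖ ^ 2 := by
  have hnear : IntegrableOn (fun x ↦ ‖harmonizableKernel H 1 x‖ ^ 2) (Set.Ioc 0 1) := by
    have hrpow : IntegrableOn (fun x : ℝ ↦ x ^ (1 - 2 * H)) (Set.Ioc 0 1) :=
      (intervalIntegrable_iff_integrableOn_Ioc_of_le zero_le_one).1
        (intervalIntegral.intervalIntegrable_rpow' (by linarith))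
    refine hrpow.mono' (by fun_prop) (ae_restrict_of_forall_mem measurableSet_Ioc fun x hx ↦ ?_)
    rw [norm_pow, norm_norm]
    exact sq_norm_harmonizableKernel_one_le_rpow H hx.1
  have hfar : IntegrableOn (fun x ↦ ‖harmonizableKernel H 1 x‖ ^ 2) (Set.Ioi 1) := by
    have hrpow : IntegrableOn (fun x : ℝ ↦ 4 * x ^ (-1 - 2 * H)) (Set.Ioi 1) :=
      (integrableOn_Ioi_rpow_of_lt (by linarith) one_pos).const_mul 4
    refine hrpow.mono' (by fun_prop) (ae_restrict_of_forall_mem measurableSet_Ioi fun x hx ↦ ?_)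
    rw [norm_pow, norm_norm]
    exact sq_norm_harmonizableKernel_one_le_four_mul_rpow H (one_pos.trans hx)
  have hIoi := hnear.union hfar
  rw [Set.Ioc_union_Ioi_eq_Ioi zero_le_one] at hIoi
  have hrad := (integrable_fun_norm_addHaar (volume : Measure ℝ)
    (f := fun y ↦ ‖harmonizableKernel H 1 y‖ ^ 2)).2 (by simpa using hIoi)
  simpa only [Real.norm_eq_abs, sq_norm_harmonizableKernel_abs] using hrad

lemma memLp_harmonizableKernel (hH0 : 0 < H) (hH1 : H < 1) (t : ℝ) :
    MemLp (harmonizableKernel H t) 2 := by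
  rcases eq_or_ne t 0 with rfl | ht
  · exact harmonizableKernel_zero H ▸ MemLp.zero
  rw [memLp_two_iff_integrable_sq_norm (by fun_prop)]
  simp only [sq_norm_harmonizableKernel_eq_mul ht]
  exact ((integrable_sq_norm_harmonizableKernel_one hH0 hH1).comp_mul_left' ht).const_mul _

lemma integral_sq_norm_harmonizableKernel (hH0 : H ≠ 0) (t : ℝ) :
    ∫ x, ‖harmonizableKernel H t x‖ ^ 2 =
      |t| ^ (2 * H) * ∫ x, ‖harmonizableKernel H 1 x‖ ^ 2 := by
  rcases eq_or_ne t 0 with rfl | ht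
  · simp [harmonizableKernel_zero, hH0]
  simp only [sq_norm_harmonizableKernel_eq_mul ht]
  rw [integral_const_mul, Measure.integral_comp_mul_left (fun y ↦ ‖harmonizableKernel H 1 y‖ ^ 2),
    smul_eq_mul, ← mul_assoc, Real.rpow_add (abs_pos.2 ht), Real.rpow_one, abs_inv]
  field_simp [abs_ne_zero.2 ht]

lemma integral_sq_norm_harmonizableKernel_one_pos (hH0 : 0 < H) (hH1 : H < 1) :
    0 < ∫ x, ‖harmonizableKernel H 1 x‖ ^ 2 := by
  rw [integral_pos_iff_support_of_nonneg (fun x ↦ by positivity)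
    (integrable_sq_norm_harmonizableKernel_one hH0 hH1)]
  have hsub : Set.Ioo 0 1 ⊆ Function.support fun x ↦ ‖harmonizableKernel H 1 x‖ ^ 2 :=
    fun x hx ↦ (sq_norm_harmonizableKernel_one_pos H hx).ne'
  exact (by simp : 0 < volume (Set.Ioo (0 : ℝ) 1)).trans_le (measure_mono hsub)

lemma exists_isHelix_of_lt_one (hH0 : 0 < H) (hH1 : H < 1) :
    ∃ k : ℝ → Lp ℂ 2 (volume : Measure ℝ), IsHelix H k := by
  have hmem := memLp_harmonizableKernel hH0 hH1
  set C : ℝ := ∫ x, ‖harmonizableKernel H 1 x‖ ^ 2 with hC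
  have hCpos : 0 < C := integral_sq_norm_harmonizableKernel_one_pos hH0 hH1
  refine ⟨fun t ↦ (√C)⁻¹ • (hmem t).toLp, ?_, fun s t ↦ ?_⟩
  · simp [harmonizableKernel_zero]
  have hsub : ‖(hmem s).toLp - (hmem t).toLp‖ ^ 2 = |s - t| ^ (2 * H) * C := by
    rw [← MemLp.toLp_sub, norm_toLp_sq, hC, ← integral_sq_norm_harmonizableKernel hH0.ne']
    simp only [Pi.sub_apply, norm_harmonizableKernel_sub]
  rw [← smul_sub, norm_smul, mul_pow, hsub, norm_inv, inv_pow, Real.norm_eq_abs, sq_abs,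
    Real.sq_sqrt hCpos.le]
  field_simp

end HarmonizableKernel

lemma exists_isHelix {H : ℝ} (hH0 : 0 < H) (hH1 : H ≤ 1) :
    ∃ (E : Type) (_ : NormedAddCommGroup E) (_ : InnerProductSpace ℝ E) (_ : CompleteSpace E)
      (k : ℝ → E), IsHelix H k := by
  rcases hH1.lt_or_eq with hlt | rfl
  · exact ⟨Lp ℂ 2 (volume : Measure ℝ), inferInstance, inferInstance, inferInstance,
      exists_isHelix_of_lt_one hH0 hlt⟩
  · exact ⟨ℝ, inferInstance, inferInstance, inferInstance, id, rfl, fun s t ↦ by simp⟩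

theorem exists_fractionalBrownianMotion_general (H : ℝ) (hH0 : 0 < H) (hH1 : H ≤ 1) (S : Set ℝ)
    (hS : S ⊆ Set.Ici 0) :
    ∃ P : Measure (S → ℝ), IsProbabilityMeasure P ∧
      ∀ (n : ℕ) (t : Fin n → S),
        IsCenteredGaussianWithCov (P.map fun ω => fun i => ω (t i))
          (fun i j => fbmCov H (t i) (t j)) := by
  obtain ⟨E, _, _, _, k, hk⟩ := exists_isHelix hH0 hH1
  obtain ⟨P, hP, hgauss⟩ :=
    exists_measure_isCenteredGaussianWithCov_inner fun t : S ↦ k t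
  refine ⟨P, hP, fun n t ↦ ?_⟩
  simpa only [hk.inner_eq_fbmCov (hS (t _).2) (hS (t _).2)] using hgauss n t

/-- Existence of fractional Brownian motion with Hurst parameter `H ∈ (0,1]` as a
probability measure `P` on the product space `ℝ^{[0,1]}`: for all times
`t₁,…,tₙ ∈ [0,1]`, the pushforward of `P` by `ω ↦ (ω(t₁),…,ω(tₙ))` is the centered
Gaussian measure on `ℝⁿ` with covariance matrix `(R(tᵢ,tⱼ))_{i,j}`. -/
theorem exists_fractionalBrownianMotion (H : ℝ) (hH0 : 0 < H) (hH1 : H ≤ 1) :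
    ∃ P : Measure (Set.Icc (0 : ℝ) 1 → ℝ), IsProbabilityMeasure P ∧
      ∀ (n : ℕ) (t : Fin n → Set.Icc (0 : ℝ) 1),
        IsCenteredGaussianWithCov (P.map fun ω => fun i => ω (t i))
          (fun i j => fbmCov H ((t i : ℝ)) ((t j : ℝ))) :=
  exists_fractionalBrownianMotion_general H hH0 hH1 (Set.Icc 0 1) Set.Icc_subset_Ici_self
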